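/- Let f ∈ BV(ℝ) and let (f_j) ⊂ BV(ℝ) with ‖f_j − f‖_{BV} → 0. Then Var(M̃f_j) → Var(M̃f), i.e., the total variations over ℝ of the uncentered maximal functions converge to the total variation of M̃f. -/

import Mathlib

open MeasureTheory Filter Set Topology

/-- Average of |f| over the interval (a,b). -/
noncomputable def mAvg (f : ℝ → ℝ) (a b : ℝ) : ℝ := (∫ t in a..b, |f t|) / (b - a)

/-- Uncentered Hardy–Littlewood maximal function. -/
noncomputable def uMax (f : ℝ → ℝ) (x : ℝ) : ℝ :=
  sSup {y | ∃ a b : ℝ, a < b ∧ a ≤ x ∧ x ≤ b ∧ y = mAvg f a b}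

/-- f has bounded variation on ℝ. -/
def BVfun (f : ℝ → ℝ) : Prop := BoundedVariationOn f Set.univ

/-- Total variation of f over a set, as a real number. -/
noncomputable def varOn (f : ℝ → ℝ) (s : Set ℝ) : ℝ := (eVariationOn f s).toReal

/-- BV norm: |f(-∞)| + Var(f). -/
noncomputable def bvNorm (f : ℝ → ℝ) : ℝ :=
  |limUnder Filter.atBot f| + varOn f Set.univ

/-- Upper precise representative: limsup over intervals I ∋ x with |I| → 0 of averages of |f|. -/
noncomputable def ubar (f : ℝ → ℝ) (x : ℝ) : ℝ :=
  ⨅ h : {h : ℝ // 0 < h},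
    sSup {y | ∃ a b : ℝ, a < b ∧ a ≤ x ∧ x ≤ b ∧ b - a ≤ h.1 ∧ y = mAvg f a b}

/-- The open "interval" (a,b) in ℝ with extended-real endpoints. -/
noncomputable def erealIoo (a b : EReal) : Set ℝ := {x : ℝ | a < (x : EReal) ∧ (x : EReal) < b}

/-- Value of g at an extended-real point, understood as a limit at ±∞. -/
noncomputable def valAt (g : ℝ → ℝ) (a : EReal) : ℝ :=
  if a = ⊥ then limUnder Filter.atBot g
  else if a = ⊤ then limUnder Filter.atTop g
  else g a.toReal

/-!
Uniform convergence `F i → f` gives uniform convergence of the maximal functions, and variation is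
lower semicontinuous. For the upper bound, every strict peak of `uMax (F i)` is nearly attained by
`|F i|` and followed by a point where `|F i|` is at most the next value of `uMax (F i)`. Hence on an
interval `[a, b]` the variation of `uMax (F i)` exceeds that of any `δ`-close function, such as
`uMax f`, by at most `4 * δ` plus the monotonicity defect
`varOn (F i) (Icc a b) - |F i a - F i b|`. Along a suitable partition the total defect of `f` is
small, and so is that of `F i`, as both the variations and the values at the partition points
converge.
-/

section Variation

variable {α : Type*} [LinearOrder α]

theorem eVariationOn_le_ofReal {E : Type*} [PseudoMetricSpace E] {u : α → E} {s : Set α} {K : ℝ}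
    (h : ∀ (n : ℕ) (x : ℕ → α), Monotone x → (∀ i, x i ∈ s) →
      ∑ i ∈ Finset.range n, dist (u (x (i + 1))) (u (x i)) ≤ K) :
    eVariationOn u s ≤ ENNReal.ofReal K := by
  refine iSup_le ?_
  rintro ⟨n, x, hx, hxs⟩
  simp only [edist_dist]
  rw [← ENNReal.ofReal_sum_of_nonneg fun _ _ => dist_nonneg]
  exact ENNReal.ofReal_le_ofReal (h n x hx hxs)

theorem eVariationOn_univ_le_of_forall_Icc {E : Type*} [PseudoEMetricSpace E] {u : α → E}
    {K : ENNReal} (h : ∀ a b, a ≤ b → eVariationOn u (Icc a b) ≤ K) : eVariationOn u univ ≤ K := by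
  rw [eVariationOn.eq_biSup_inter_Icc]
  exact iSup₂_le fun p hp => (univ_inter (Icc p.1 p.2)).symm ▸ h p.1 p.2 hp.2.2

variable {E : Type*} [SeminormedAddCommGroup E]

theorem eVariationOn_add_le (u v : α → E) (s : Set α) :
    eVariationOn (u + v) s ≤ eVariationOn u s + eVariationOn v s := by
  refine iSup_le ?_
  rintro ⟨n, x, hx, hxs⟩
  calc ∑ i ∈ Finset.range n, edist ((u + v) (x (i + 1))) ((u + v) (x i))
      ≤ ∑ i ∈ Finset.range n,
          (edist (u (x (i + 1))) (u (x i)) + edist (v (x (i + 1))) (v (x i))) :=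
        Finset.sum_le_sum fun _ _ => edist_add_add_le _ _ _ _
    _ ≤ eVariationOn u s + eVariationOn v s := by
        rw [Finset.sum_add_distrib]
        exact add_le_add (eVariationOn.sum_le hx hxs) (eVariationOn.sum_le hx hxs)

theorem eVariationOn_neg (u : α → E) (s : Set α) : eVariationOn (-u) s = eVariationOn u s := by
  simp only [eVariationOn, Pi.neg_apply, edist_neg_neg]

theorem eVariationOn_sub_le (u v : α → E) (s : Set α) :
    eVariationOn (u - v) s ≤ eVariationOn u s + eVariationOn v s := by
  simpa only [sub_eq_add_neg, eVariationOn_neg] using eVariationOn_add_le u (-v) s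

end Variation

section VarOn

variable {f g : ℝ → ℝ} {s t : Set ℝ}

theorem varOn_nonneg (f : ℝ → ℝ) (s : Set ℝ) : 0 ≤ varOn f s := ENNReal.toReal_nonneg

theorem varOn_mono (hf : BoundedVariationOn f t) (hst : s ⊆ t) : varOn f s ≤ varOn f t :=
  ENNReal.toReal_mono hf (eVariationOn.mono f hst)

theorem abs_sub_le_varOn (hf : BoundedVariationOn f s) {a b : ℝ} (ha : a ∈ s) (hb : b ∈ s) :
    |f a - f b| ≤ varOn f s :=
  hf.dist_le ha hb

theorem varOn_Icc_add_Icc {a b c : ℝ} (hf : BoundedVariationOn f (Icc a c)) (hab : a ≤ b)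
    (hbc : b ≤ c) : varOn f (Icc a b) + varOn f (Icc b c) = varOn f (Icc a c) := by
  have h := eVariationOn.Icc_add_Icc f hab hbc (mem_univ b)
  simp only [univ_inter] at h
  rw [varOn, varOn, varOn, ← h, ENNReal.toReal_add (hf.mono (Icc_subset_Icc_right hbc))
    (hf.mono (Icc_subset_Icc_left hab))]

theorem varOn_Icc_add_abs_sub_le {a b c : ℝ} (hf : BoundedVariationOn f (Icc a c)) (hab : a ≤ b)
    (hbc : b ≤ c) : varOn f (Icc a b) + |f b - f c| ≤ varOn f (Icc a c) := by
  rw [← varOn_Icc_add_Icc hf hab hbc]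
  gcongr
  exact abs_sub_le_varOn (hf.mono (Icc_subset_Icc_left hab)) (left_mem_Icc.2 hbc)
    (right_mem_Icc.2 hbc)

theorem abs_sub_add_abs_sub_le_varOn {a b c : ℝ} (hf : BoundedVariationOn f (Icc a c))
    (hab : a ≤ b) (hbc : b ≤ c) : |f a - f b| + |f b - f c| ≤ varOn f (Icc a c) := by
  refine le_trans ?_ (varOn_Icc_add_abs_sub_le hf hab hbc)
  gcongr
  exact abs_sub_le_varOn (hf.mono (Icc_subset_Icc_right hbc)) (left_mem_Icc.2 hab)
    (right_mem_Icc.2 hab)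

theorem varOn_univ_le_of_forall_Icc {K : ℝ}
    (h : ∀ a b, ∃ c ≤ a, ∃ d ≥ b, BoundedVariationOn f (Icc c d) ∧ varOn f (Icc c d) ≤ K) :
    varOn f univ ≤ K := by
  obtain ⟨c, -, d, -, -, hK⟩ := h 0 0
  refine ENNReal.toReal_le_of_le_ofReal ((varOn_nonneg f _).trans hK)
    (eVariationOn_univ_le_of_forall_Icc fun a b _ => ?_)
  obtain ⟨c, hca, d, hbd, hcd, hK⟩ := h a b
  exact (eVariationOn.mono f (Icc_subset_Icc hca hbd)).trans
    ((ENNReal.le_ofReal_iff_toReal_le hcd ((varOn_nonneg f _).trans hK)).2 hK)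

theorem varOn_le_varOn_add_varOn_sub (hf : BoundedVariationOn f s) (hg : BoundedVariationOn g s) :
    varOn f s ≤ varOn g s + varOn (f - g) s := by
  have hfg := ne_top_of_le_ne_top (ENNReal.add_ne_top.2 ⟨hf, hg⟩) (eVariationOn_sub_le f g s)
  have h := eVariationOn_add_le g (f - g) s
  rw [add_sub_cancel] at h
  exact (ENNReal.toReal_mono (ENNReal.add_ne_top.2 ⟨hg, hfg⟩) h).trans_eq
    (ENNReal.toReal_add hg hfg)

theorem abs_varOn_sub_varOn_le (hf : BoundedVariationOn f s) (hg : BoundedVariationOn g s) :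
    |varOn f s - varOn g s| ≤ varOn (f - g) s := by
  have hcomm : varOn (g - f) s = varOn (f - g) s := by
    rw [varOn, ← neg_sub, eVariationOn_neg, varOn]
  rw [abs_sub_le_iff]
  constructor
  · linarith [varOn_le_varOn_add_varOn_sub hf hg]
  · linarith [varOn_le_varOn_add_varOn_sub hg hf]

theorem exists_lt_sum_abs_sub (hs : s.Nonempty) {v : ℝ} (hv : v < varOn f s) :
    ∃ (n : ℕ) (x : ℕ → ℝ), Monotone x ∧ (∀ i, x i ∈ s) ∧
      v < ∑ i ∈ Finset.range n, |f (x (i + 1)) - f (x i)| := by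
  by_contra! hle
  obtain ⟨p, hp⟩ := hs
  have hv₀ : 0 ≤ v := by simpa using hle 0 (fun _ => p) monotone_const fun _ => hp
  exact hv.not_ge (ENNReal.toReal_le_of_le_ofReal hv₀ (eVariationOn_le_ofReal hle))

theorem eventually_lt_varOn {ι : Type*} {l : Filter ι} {F : ι → ℝ → ℝ}
    (hF : ∀ i, BoundedVariationOn (F i) s) (hlim : ∀ x ∈ s, Tendsto (F · x) l (𝓝 (f x)))
    {v : ℝ} (hv : v < varOn f s) : ∀ᶠ i in l, v < varOn (F i) s := by
  rcases lt_or_ge v 0 with hneg | hnonneg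
  · exact .of_forall fun i => hneg.trans_le (varOn_nonneg _ _)
  · have hlt : ENNReal.ofReal v < eVariationOn f s := by
      by_contra! hle
      exact hv.not_ge (ENNReal.toReal_le_of_le_ofReal hnonneg hle)
    filter_upwards [eVariationOn.lowerSemicontinuous_aux hlim hlt] with i hi
    exact (ENNReal.ofReal_lt_iff_lt_toReal hnonneg (hF i)).1 hi

end VarOn

section Peaks

variable {α : Type*} [LinearOrder α]

/-- `E` controls the peaks of `u` on `[s, t]`: whenever `u` has a strict peak at `b` between `a` and
`a'`, and `q ∈ [a', t]`, the increment of `E` up to `q` from a suitable point after `a` is at least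
twice the drop `u b - u a'`. Such an `E` bounds the variation of `u`. The drop is only required to
be approximated, by `K - u a'` with `K < u b`, as the supremum defining `uMax` need not be
attained. -/
def ControlsPeaks (E u : α → ℝ) (s t : α) : Prop :=
  ∀ ⦃a b a' q⦄, s ≤ a → a ≤ b → b ≤ a' → a' ≤ q → q ≤ t → u a < u b → u a' < u b →
    ∀ K < u b, ∃ y ∈ Ioc a q, E y + 2 * K ≤ E q + 2 * u a'

variable {E u : α → ℝ} {s t : α}

/- `L` is the length of a chain of values of `u` ending at `p`, which is extended by `b`. -/
theorem ControlsPeaks.add_abs_sub_add_abs_sub_le (hE : ControlsPeaks E u s t) {p b : α}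
    (hsp : s ≤ p) (hpb : p ≤ b) {C L : ℝ}
    (hL : ∀ a q, p ≤ a → a ≤ q → q ∈ Ioc s t → L + |u a - u p| ≤ C + u a + E q)
    {a q : α} (hba : b ≤ a) (haq : a ≤ q) (hq : q ∈ Ioc s t) :
    L + |u b - u p| + |u a - u b| ≤ C + u a + E q := by
  rcases le_or_gt (u b) (u a) with hrise | hfall
  · rw [abs_of_nonneg (sub_nonneg.2 hrise)]
    linarith [hL b q hpb (hba.trans haq) hq]
  rcases le_or_gt (u b) (u p) with hfall' | hrise'
  · have hmerge : |u b - u p| + |u a - u b| = |u a - u p| := by grind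
    linarith [hL a q (hpb.trans hba) haq hq]
  rw [abs_of_pos (sub_pos.2 hrise'), abs_of_neg (sub_neg.2 hfall)]
  suffices u b ≤ (C + 2 * u a + E q + u p - L) / 2 by linarith
  refine le_of_forall_lt_imp_le_of_dense fun K hK => ?_
  obtain ⟨y, hy, hEy⟩ := hE hsp hpb hba haq hq.2 hrise' hfall K hK
  have hLp := hL p y le_rfl hy.1.le ⟨hsp.trans_lt hy.1, hy.2.trans hq.2⟩
  rw [sub_self, abs_zero] at hLp
  linarith

theorem ControlsPeaks.abs_sub_add_sum_add_abs_sub_le (hE : ControlsPeaks E u s t)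
    (hbase : ∀ p q, p ∈ Icc s q → q ∈ Ioc s t → 0 ≤ E q + 2 * u p)
    {x : ℕ → α} (hx : Monotone x) (hsx : s ≤ x 0) (n : ℕ) (a q : α) (ha : x n ≤ a) (haq : a ≤ q)
    (hq : q ∈ Ioc s t) :
    |u (x 0) - u s| + ∑ i ∈ Finset.range n, |u (x (i + 1)) - u (x i)| + |u a - u (x n)| ≤
      u s + u a + E q := by
  induction n generalizing a q with
  | zero =>
    have hchain := hE.add_abs_sub_add_abs_sub_le le_rfl hsx (C := u s) (L := 0)
      (fun a q hsa haq hq => by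
        have hs := hbase s q ⟨le_rfl, hq.1.le⟩ hq
        have ha := hbase a q ⟨hsa, haq⟩ hq
        grind) ha haq hq
    simpa using hchain
  | succ n ih =>
    rw [Finset.sum_range_succ, ← add_assoc]
    exact hE.add_abs_sub_add_abs_sub_le (hsx.trans (hx n.zero_le)) (hx n.le_succ) ih ha haq hq

theorem ControlsPeaks.eVariationOn_Icc_le (hE : ControlsPeaks E u s t) (hst : s < t)
    (hbase : ∀ p q, p ∈ Icc s q → q ∈ Ioc s t → 0 ≤ E q + 2 * u p) :
    eVariationOn u (Icc s t) ≤ ENNReal.ofReal (u s + u t + E t) := by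
  refine eVariationOn_le_ofReal fun n x hx hxs => ?_
  have h := hE.abs_sub_add_sum_add_abs_sub_le hbase hx (hxs 0).1 n t t (hxs n).2 le_rfl
    ⟨hst, le_rfl⟩
  simp only [Real.dist_eq]
  linarith [abs_nonneg (u (x 0) - u s), abs_nonneg (u t - u (x n))]

end Peaks

section MaximalFunction

variable {f g : ℝ → ℝ} {a b x C D δ : ℝ}

theorem mAvg_eq_setAverage (f : ℝ → ℝ) (hab : a < b) : mAvg f a b = ⨍ t in Ioc a b, |f t| := by
  rw [mAvg, ← interval_average_eq_div, uIoc_of_le hab.le]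

theorem exists_abs_le_mAvg (hf : IntervalIntegrable f volume a b) (hab : a < b) :
    ∃ y ∈ Icc a b, |f y| ≤ mAvg f a b := by
  rw [mAvg_eq_setAverage f hab]
  obtain ⟨y, hy, hle⟩ := exists_le_setAverage (μ := volume) (by simp [hab]) (by simp)
    ((intervalIntegrable_iff_integrableOn_Ioc_of_le hab.le).1 hf.abs)
  exact ⟨y, Ioc_subset_Icc_self hy, hle⟩

theorem exists_mAvg_le_abs (hf : IntervalIntegrable f volume a b) (hab : a < b) :
    ∃ y ∈ Icc a b, mAvg f a b ≤ |f y| := by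
  rw [mAvg_eq_setAverage f hab]
  obtain ⟨y, hy, hle⟩ := exists_setAverage_le (μ := volume) (by simp [hab]) (by simp)
    ((intervalIntegrable_iff_integrableOn_Ioc_of_le hab.le).1 hf.abs)
  exact ⟨y, Ioc_subset_Icc_self hy, hle⟩

theorem mAvg_nonneg (f : ℝ → ℝ) (hab : a < b) : 0 ≤ mAvg f a b :=
  div_nonneg (intervalIntegral.integral_nonneg hab.le fun _ _ => abs_nonneg _)
    (sub_nonneg.2 hab.le)

theorem mAvg_le_of_abs_le (hC : ∀ x, |f x| ≤ C) (hab : a < b) : mAvg f a b ≤ C := by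
  have h := intervalIntegral.norm_integral_le_of_norm_le_const (f := fun t => |f t|) (a := a)
    (b := b) (C := C) fun t _ => by simpa using hC t
  rw [abs_of_pos (sub_pos.2 hab)] at h
  exact (div_le_iff₀ (sub_pos.2 hab)).2 ((le_abs_self _).trans h)

theorem mAvg_le_mAvg_add (hf : IntervalIntegrable f volume a b)
    (hg : IntervalIntegrable g volume a b) (hfg : ∀ x, |f x - g x| ≤ δ) (hab : a < b) :
    mAvg f a b ≤ mAvg g a b + δ := by
  have hmono : ∫ t in a..b, |f t| ≤ ∫ t in a..b, (|g t| + δ) :=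
    intervalIntegral.integral_mono_on hab.le hf.abs (hg.abs.add intervalIntegrable_const)
      fun t _ => by linarith [abs_sub_abs_le_abs_sub (f t) (g t), hfg t]
  rw [intervalIntegral.integral_add hg.abs intervalIntegrable_const,
    intervalIntegral.integral_const, smul_eq_mul] at hmono
  have hpos : 0 < b - a := sub_pos.2 hab
  rw [mAvg, mAvg, div_add' _ _ _ hpos.ne', div_le_div_iff_of_pos_right hpos]
  linarith

theorem mAvg_le_uMax (hC : ∀ x, |f x| ≤ C) (hab : a < b) (hx : x ∈ Icc a b) :
    mAvg f a b ≤ uMax f x := by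
  refine le_csSup ⟨C, ?_⟩ ⟨a, b, hab, hx.1, hx.2, rfl⟩
  rintro _ ⟨a, b, hab, -, -, rfl⟩
  exact mAvg_le_of_abs_le hC hab

theorem uMax_le (h : ∀ a b, a < b → x ∈ Icc a b → mAvg f a b ≤ C) : uMax f x ≤ C := by
  refine csSup_le ⟨_, x, x + 1, by simp, le_rfl, by simp, rfl⟩ ?_
  rintro _ ⟨a, b, hab, hax, hxb, rfl⟩
  exact h a b hab ⟨hax, hxb⟩

theorem exists_lt_mAvg_of_lt_uMax (h : C < uMax f x) :
    ∃ a b, a < b ∧ x ∈ Icc a b ∧ C < mAvg f a b := by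
  by_contra! hle
  exact h.not_ge (uMax_le hle)

theorem uMax_nonneg (f : ℝ → ℝ) (x : ℝ) : 0 ≤ uMax f x := by
  refine Real.sSup_nonneg ?_
  rintro _ ⟨a, b, hab, -, -, rfl⟩
  exact mAvg_nonneg f hab

theorem uMax_le_uMax_add (hf : ∀ a b, IntervalIntegrable f volume a b)
    (hg : ∀ a b, IntervalIntegrable g volume a b) (hD : ∀ x, |g x| ≤ D)
    (hfg : ∀ x, |f x - g x| ≤ δ) (x : ℝ) : uMax f x ≤ uMax g x + δ :=
  uMax_le fun a b hab hx => (mAvg_le_mAvg_add (hf a b) (hg a b) hfg hab).trans <| by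
    gcongr
    exact mAvg_le_uMax hD hab hx

theorem abs_uMax_sub_uMax_le (hf : ∀ a b, IntervalIntegrable f volume a b)
    (hg : ∀ a b, IntervalIntegrable g volume a b) (hC : ∀ x, |f x| ≤ C) (hD : ∀ x, |g x| ≤ D)
    (hfg : ∀ x, |f x - g x| ≤ δ) (x : ℝ) : |uMax f x - uMax g x| ≤ δ := by
  have hgf : ∀ x, |g x - f x| ≤ δ := fun x => abs_sub_comm (f x) (g x) ▸ hfg x
  rw [abs_sub_le_iff]
  constructor
  · linarith [uMax_le_uMax_add hf hg hD hfg x]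
  · linarith [uMax_le_uMax_add hg hf hC hgf x]

end MaximalFunction

section LocalEstimate

variable {f : ℝ → ℝ} {s t c C : ℝ}

theorem intervalIntegrable_of_boundedVariationOn {a b : ℝ}
    (hf : BoundedVariationOn f (uIcc a b)) : IntervalIntegrable f volume a b := by
  obtain ⟨p, q, hp, hq, rfl⟩ := hf.locallyBoundedVariationOn.exists_monotoneOn_sub_monotoneOn
  exact hp.intervalIntegrable.sub hq.intervalIntegrable

/- An interval on which `|f|` averages more than both `uMax f a` and `uMax f a'` contains neither
`a` nor `a'`, so one through `b` lies strictly between them. -/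
theorem exists_abs_peak_valley {a b a' q K : ℝ} (hf : IntervalIntegrable f volume a q)
    (hC : ∀ x, |f x| ≤ C) (hab : a ≤ b) (hba' : b ≤ a') (haq : a' ≤ q)
    (hl : uMax f a < uMax f b) (hr : uMax f a' < uMax f b) (hK : K < uMax f b) :
    ∃ y r, a < y ∧ y ≤ r ∧ r ≤ q ∧ K < |f y| ∧ |f r| ≤ uMax f a' := by
  have hf' {α β : ℝ} (hα : a ≤ α) (hαβ : α < β) (hβ : β ≤ q) : IntervalIntegrable f volume α β := by
    refine hf.mono_set ?_
    rw [uIcc_of_le hαβ.le, uIcc_of_le (hα.trans (hαβ.le.trans hβ))]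
    exact Icc_subset_Icc hα hβ
  obtain ⟨α, β, hαβ, hb, havg⟩ := exists_lt_mAvg_of_lt_uMax (max_lt (max_lt hl hr) hK)
  obtain ⟨⟨havgl, havgr⟩, havgK⟩ := by simpa only [max_lt_iff] using havg
  have haα : a < α := by
    by_contra! hαa
    exact havgl.not_ge (mAvg_le_uMax hC hαβ ⟨hαa, hab.trans hb.2⟩)
  have hβa' : β < a' := by
    by_contra! ha'β
    exact havgr.not_ge (mAvg_le_uMax hC hαβ ⟨hb.1.trans hba', ha'β⟩)
  have hβq : β < q := hβa'.trans_le haq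
  obtain ⟨y, hy, hfy⟩ := exists_mAvg_le_abs (hf' haα.le hαβ hβq.le) hαβ
  obtain ⟨r, hr, hfr⟩ := exists_abs_le_mAvg (hf' (haα.le.trans hαβ.le) hβq le_rfl) hβq
  exact ⟨y, r, haα.trans_le hy.1, hy.2.trans hr.1, hr.2, havgK.trans_le hfy,
    hfr.trans (mAvg_le_uMax hC hβq ⟨hβa'.le, haq⟩)⟩

/- The maximum of `|s| + |t|` and `|s - t| + 2 * c` is `|s - t| + 2 * max c d`, where `d` is the
distance from `0` to the segment between `s` and `t`. -/
theorem max_add_two_mul_abs_le (s y t : ℝ) {r v c : ℝ} (hr : |r| ≤ v) (hc : c ≤ v) :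
    max (|s| + |t|) (|s - t| + 2 * c) + 2 * |y| ≤
      max (|s| + |y|) (|s - y| + 2 * c) + |y - r| + |r - t| + 2 * v := by
  have hsum := le_max_left (|s| + |y|) (|s - y| + 2 * c)
  have hdist := le_max_right (|s| + |y|) (|s - y| + 2 * c)
  rw [← le_sub_iff_add_le]
  refine max_le ?_ ?_
  · grind
  · grind

theorem controlsPeaks_uMax (hf : BoundedVariationOn f (Icc s t)) (hC : ∀ x, |f x| ≤ C)
    (hc : ∀ p ∈ Icc s t, c ≤ uMax f p) :
    ControlsPeaks
      (fun q => varOn f (Icc s q) - max (|f s| + |f q|) (|f s - f q| + 2 * c)) (uMax f) s t := by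
  intro a b a' q hsa hab hba' haq hqt hl hr K hK
  have haq' : a ≤ q := hab.trans (hba'.trans haq)
  have hint : IntervalIntegrable f volume a q := intervalIntegrable_of_boundedVariationOn <| by
    rw [uIcc_of_le haq']
    exact hf.mono (Icc_subset_Icc hsa hqt)
  obtain ⟨y, r, hay, hyr, hrq, hfy, hfr⟩ := exists_abs_peak_valley hint hC hab hba' haq hl hr hK
  have hsy : s ≤ y := hsa.trans hay.le
  have hvar_r := varOn_Icc_add_abs_sub_le
    (hf.mono (Icc_subset_Icc_right (hrq.trans hqt))) hsy hyr
  have hvar_q := varOn_Icc_add_abs_sub_le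
    (hf.mono (Icc_subset_Icc_right hqt)) (hsy.trans hyr) hrq
  have hmax := max_add_two_mul_abs_le (f s) (f y) (f q) hfr
    (hc a' ⟨hsa.trans (hab.trans hba'), haq.trans hqt⟩)
  exact ⟨y, ⟨hay, hyr.trans hrq⟩, by dsimp only; linarith⟩

theorem eVariationOn_uMax_Icc_le_sub_max (hf : BoundedVariationOn f (Icc s t))
    (hC : ∀ x, |f x| ≤ C) (hst : s < t) (hc : ∀ p ∈ Icc s t, c ≤ uMax f p) :
    eVariationOn (uMax f) (Icc s t) ≤ ENNReal.ofReal (uMax f s + uMax f t +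
      (varOn f (Icc s t) - max (|f s| + |f t|) (|f s - f t| + 2 * c))) := by
  refine (controlsPeaks_uMax hf hC hc).eVariationOn_Icc_le hst fun p q hp hq => ?_
  have hfq := hf.mono (Icc_subset_Icc_right hq.2)
  obtain ⟨r, hr, hfr⟩ := exists_abs_le_mAvg
    (intervalIntegrable_of_boundedVariationOn ((uIcc_of_le hq.1.le).symm ▸ hfq)) hq.1
  have hrp : |f r| ≤ uMax f p := hfr.trans (mAvg_le_uMax hC hq.1 hp)
  have hvar := abs_sub_add_abs_sub_le_varOn hfq hr.1 hr.2
  have hcp := hc p ⟨hp.1, hp.2.trans hq.2⟩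
  suffices max (|f s| + |f q|) (|f s - f q| + 2 * c) ≤ varOn f (Icc s q) + 2 * uMax f p by linarith
  refine max_le ?_ ?_
  · grind
  · linarith [abs_sub_le (f s) (f r) (f q)]

theorem eVariationOn_uMax_Icc_le (hf : BoundedVariationOn f (Icc s t)) (hC : ∀ x, |f x| ≤ C)
    (hc : ∀ p ∈ Icc s t, c ≤ uMax f p) :
    eVariationOn (uMax f) (Icc s t) ≤
      ENNReal.ofReal (uMax f s + uMax f t - 2 * c + (varOn f (Icc s t) - |f s - f t|)) := by
  rcases le_or_gt t s with hts | hst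
  · rw [eVariationOn.subsingleton _ (subsingleton_Icc_of_ge hts)]
    exact zero_le
  · refine (eVariationOn_uMax_Icc_le_sub_max hf hC hst hc).trans (ENNReal.ofReal_le_ofReal ?_)
    linarith [le_max_right (|f s| + |f t|) (|f s - f t| + 2 * c)]

theorem varOn_uMax_Icc_le {v : ℝ → ℝ} {δ : ℝ} (hf : BoundedVariationOn f (Icc s t))
    (hC : ∀ x, |f x| ≤ C) (hv : BoundedVariationOn v (Icc s t)) (hst : s ≤ t)
    (hfv : ∀ p ∈ Icc s t, |uMax f p - v p| ≤ δ) :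
    varOn (uMax f) (Icc s t) ≤
      varOn v (Icc s t) + 4 * δ + (varOn f (Icc s t) - |f s - f t|) := by
  -- `v s + v t - varOn v (Icc s t)` is a lower bound for `2 * v` on `Icc s t`.
  set c := (v s + v t - varOn v (Icc s t)) / 2 - δ with hc_def
  have hs : s ∈ Icc s t := left_mem_Icc.2 hst
  have ht : t ∈ Icc s t := right_mem_Icc.2 hst
  have hc : ∀ p ∈ Icc s t, c ≤ uMax f p := by
    intro p hp
    have hvar := abs_sub_add_abs_sub_le_varOn hv hp.1 hp.2
    linarith [le_abs_self (v s - v p), neg_abs_le (v p - v t), (abs_le.1 (hfv p hp)).1]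
  refine (ENNReal.toReal_le_of_le_ofReal ?_ (eVariationOn_uMax_Icc_le hf hC hc)).trans ?_
  · linarith [hc s hs, hc t ht, abs_sub_le_varOn hf hs ht]
  · linarith [(abs_le.1 (hfv s hs)).2, (abs_le.1 (hfv t ht)).2]

end LocalEstimate

namespace BVfun

variable {f g : ℝ → ℝ}

protected theorem boundedVariationOn (hf : BVfun f) (s : Set ℝ) : BoundedVariationOn f s :=
  BoundedVariationOn.mono hf (subset_univ s)

protected theorem intervalIntegrable (hf : BVfun f) (a b : ℝ) : IntervalIntegrable f volume a b :=
  intervalIntegrable_of_boundedVariationOn (hf.boundedVariationOn _)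

protected theorem sub (hf : BVfun f) (hg : BVfun g) : BVfun (f - g) :=
  ne_top_of_le_ne_top (ENNReal.add_ne_top.2 ⟨hf, hg⟩) (eVariationOn_sub_le f g univ)

theorem abs_le_bvNorm (hf : BVfun f) (x : ℝ) : |f x| ≤ bvNorm f := by
  have hlim : Tendsto f atBot (𝓝 (limUnder atBot f)) :=
    BoundedVariationOn.tendsto_atBot_limUnder hf
  have hle : |f x - limUnder atBot f| ≤ varOn f univ :=
    le_of_tendsto (hlim.const_sub (f x)).abs
      (.of_forall fun y => abs_sub_le_varOn hf (mem_univ x) (mem_univ y))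
  rw [bvNorm]
  linarith [abs_sub_abs_le_abs_sub (f x) (limUnder atBot f)]

theorem uMax_le_bvNorm (hf : BVfun f) (x : ℝ) : uMax f x ≤ bvNorm f :=
  uMax_le fun _ _ hab _ => mAvg_le_of_abs_le hf.abs_le_bvNorm hab

protected theorem uMax (hf : BVfun f) : BVfun (uMax f) := by
  refine ne_top_of_le_ne_top (ENNReal.ofReal_ne_top (r := 2 * bvNorm f + varOn f univ))
    (eVariationOn_univ_le_of_forall_Icc fun s t _ => ?_)
  refine (eVariationOn_uMax_Icc_le (hf.boundedVariationOn _) hf.abs_le_bvNorm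
    fun p _ => uMax_nonneg f p).trans (ENNReal.ofReal_le_ofReal ?_)
  linarith [hf.uMax_le_bvNorm s, hf.uMax_le_bvNorm t, varOn_mono hf (subset_univ (Icc s t)),
    abs_nonneg (f s - f t)]

section Comparison

variable {v : ℝ → ℝ} {δ : ℝ} {x : ℕ → ℝ}

theorem varOn_uMax_Icc_le_sub_sum (hf : BVfun f) (hv : BVfun v) (hfv : ∀ p, |uMax f p - v p| ≤ δ)
    (hx : Monotone x) {s : ℝ} (hs : s ≤ x 0) (n : ℕ) :
    varOn (uMax f) (Icc s (x n)) ≤ varOn v (Icc s (x n)) + 4 * (n + 1) * δ +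
      (varOn f (Icc s (x n)) - ∑ i ∈ Finset.range n, |f (x (i + 1)) - f (x i)|) := by
  have hstep {a b : ℝ} (hab : a ≤ b) := varOn_uMax_Icc_le (hf.boundedVariationOn _)
    hf.abs_le_bvNorm (hv.boundedVariationOn _) hab fun p _ => hfv p
  induction n with
  | zero =>
    simp only [Nat.cast_zero, Finset.range_zero, Finset.sum_empty]
    linarith [hstep hs, abs_nonneg (f s - f (x 0))]
  | succ n ih =>
    have hsn : s ≤ x n := hs.trans (hx n.zero_le)
    have hn : x n ≤ x (n + 1) := hx n.le_succ
    rw [← varOn_Icc_add_Icc (hf.uMax.boundedVariationOn _) hsn hn,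
      ← varOn_Icc_add_Icc (hv.boundedVariationOn _) hsn hn,
      ← varOn_Icc_add_Icc (hf.boundedVariationOn _) hsn hn, Finset.sum_range_succ,
      abs_sub_comm (f (x (n + 1)))]
    push_cast
    linarith [hstep hn]

theorem varOn_uMax_univ_le_sub_sum (hf : BVfun f) (hv : BVfun v)
    (hfv : ∀ p, |uMax f p - v p| ≤ δ) (hx : Monotone x) (n : ℕ) :
    varOn (uMax f) univ ≤ varOn v univ + 4 * (n + 2) * δ +
      (varOn f univ - ∑ i ∈ Finset.range n, |f (x (i + 1)) - f (x i)|) := by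
  refine varOn_univ_le_of_forall_Icc fun a b => ?_
  have hs : min a (x 0) ≤ x 0 := min_le_right _ _
  have ht : x n ≤ max b (x n) := le_max_right _ _
  have hsn : min a (x 0) ≤ x n := hs.trans (hx n.zero_le)
  refine ⟨min a (x 0), min_le_left _ _, max b (x n), le_max_left _ _,
    hf.uMax.boundedVariationOn _, ?_⟩
  have hlast := varOn_uMax_Icc_le (hf.boundedVariationOn _) hf.abs_le_bvNorm
    (hv.boundedVariationOn _) ht fun p _ => hfv p
  have hvar_v := varOn_mono hv (subset_univ (Icc (min a (x 0)) (max b (x n))))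
  have hvar_f := varOn_mono hf (subset_univ (Icc (min a (x 0)) (max b (x n))))
  rw [← varOn_Icc_add_Icc (hv.boundedVariationOn _) hsn ht] at hvar_v
  rw [← varOn_Icc_add_Icc (hf.boundedVariationOn _) hsn ht] at hvar_f
  rw [← varOn_Icc_add_Icc (hf.uMax.boundedVariationOn _) hsn ht]
  linarith [hf.varOn_uMax_Icc_le_sub_sum hv hfv hx hs n, abs_nonneg (f (x n) - f (max b (x n)))]

end Comparison

end BVfun

section Convergence

variable {ι : Type*} {l : Filter ι} {f : ℝ → ℝ} {F : ι → ℝ → ℝ}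

theorem tendstoUniformly_uMax (hF : ∀ i, BVfun (F i)) (hf : BVfun f)
    (hunif : TendstoUniformly F f l) : TendstoUniformly (fun i => uMax (F i)) (uMax f) l := by
  rw [Metric.tendstoUniformly_iff] at hunif ⊢
  intro ε hε
  filter_upwards [hunif (ε / 2) (half_pos hε)] with i hi x
  exact (abs_uMax_sub_uMax_le hf.intervalIntegrable (hF i).intervalIntegrable hf.abs_le_bvNorm
    (hF i).abs_le_bvNorm (fun y => (hi y).le) x).trans_lt (half_lt_self hε)

theorem eventually_varOn_uMax_lt (hF : ∀ i, BVfun (F i)) (hf : BVfun f)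
    (hunif : TendstoUniformly F f l)
    (hvar : Tendsto (fun i => varOn (F i) univ) l (𝓝 (varOn f univ)))
    {K : ℝ} (hK : varOn (uMax f) univ < K) : ∀ᶠ i in l, varOn (uMax (F i)) univ < K := by
  set ε := (K - varOn (uMax f) univ) / 2 with hε_def
  have hε : 0 < ε := half_pos (sub_pos.2 hK)
  obtain ⟨n, x, hx, -, hsum⟩ := exists_lt_sum_abs_sub univ_nonempty (sub_lt_self (varOn f univ) hε)
  have hdefect : Tendsto
      (fun i => varOn (F i) univ - ∑ k ∈ Finset.range n, |F i (x (k + 1)) - F i (x k)|) l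
      (𝓝 (varOn f univ - ∑ k ∈ Finset.range n, |f (x (k + 1)) - f (x k)|)) :=
    hvar.sub <| tendsto_finsetSum _ fun k _ =>
      ((hunif.tendsto_at (x (k + 1))).sub (hunif.tendsto_at (x k))).abs
  have hδ : 0 < ε / (4 * (n + 2)) := by positivity
  filter_upwards [hdefect.eventually_lt_const (sub_lt_comm.1 hsum),
    Metric.tendstoUniformly_iff.1 (tendstoUniformly_uMax hF hf hunif) _ hδ] with i hi hiδ
  have hle := (hF i).varOn_uMax_univ_le_sub_sum hf.uMax
    (fun p => (abs_sub_comm _ _).trans_le (hiδ p).le) hx n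
  rw [mul_div_cancel₀ ε (by positivity)] at hle
  linarith

theorem stmt9_general (hF : ∀ i, BVfun (F i)) (hf : BVfun f) (hunif : TendstoUniformly F f l)
    (hvar : Tendsto (fun i => varOn (F i) univ) l (𝓝 (varOn f univ))) :
    Tendsto (fun i => varOn (uMax (F i)) univ) l (𝓝 (varOn (uMax f) univ)) :=
  tendsto_order.2
    ⟨fun _ hK => eventually_lt_varOn (fun i => (hF i).uMax)
      (fun x _ => (tendstoUniformly_uMax hF hf hunif).tendsto_at x) hK,
    fun _ hK => eventually_varOn_uMax_lt hF hf hunif hvar hK⟩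

theorem tendstoUniformly_of_tendsto_bvNorm_sub (hF : ∀ i, BVfun (F i)) (hf : BVfun f)
    (hlim : Tendsto (fun i => bvNorm (F i - f)) l (𝓝 0)) : TendstoUniformly F f l := by
  rw [Metric.tendstoUniformly_iff]
  intro ε hε
  filter_upwards [hlim.eventually_lt_const hε] with i hi x
  rw [dist_comm]
  exact (((hF i).sub hf).abs_le_bvNorm x).trans_lt hi

theorem tendsto_varOn_univ_of_tendsto_bvNorm_sub (hF : ∀ i, BVfun (F i)) (hf : BVfun f)
    (hlim : Tendsto (fun i => bvNorm (F i - f)) l (𝓝 0)) :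
    Tendsto (fun i => varOn (F i) univ) l (𝓝 (varOn f univ)) :=
  tendsto_iff_dist_tendsto_zero.2 <| squeeze_zero (fun _ => dist_nonneg)
    (fun i => (abs_varOn_sub_varOn_le (hF i) hf).trans
      (le_add_of_nonneg_left (abs_nonneg (limUnder atBot (F i - f))))) hlim

end Convergence

theorem stmt9 (f : ℝ → ℝ) (hf : BVfun f) (fj : ℕ → ℝ → ℝ) (hfj : ∀ j, BVfun (fj j))
    (hconv : Tendsto (fun j => bvNorm (fj j - f)) atTop (𝓝 0)) :
    Tendsto (fun j => varOn (uMax (fj j)) Set.univ) atTop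
      (𝓝 (varOn (uMax f) Set.univ)) :=
  stmt9_general hfj hf (tendstoUniformly_of_tendsto_bvNorm_sub hfj hf hconv)
    (tendsto_varOn_univ_of_tendsto_bvNorm_sub hfj hf hconv)
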